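/- arXiv:2312.01869 — 5 statements merged into one kernel-verified Lean document; each statement's English description precedes it below -/
import Mathlib

section
/- (Concatenation of nodes.) Let A, D₁, D₂ : ℝ → ℝ and β₁, β₂ : ℝ → ℝ be nonnegative functions with A nonnegative. Suppose that for all t ≥ 0, D₁(t) ≥ inf_{s ∈ [0,t]} (A(s) + β₁(t − s)) (the first system offers service curve β₁ to input A with output D₁) and D₂(t) ≥ inf_{s ∈ [0,t]} (D₁(s) + β₂(t − s)) (the second system offers service curve β₂ to input D₁ with output D₂). Then for all t ≥ 0, D₂(t) ≥ inf_{s ∈ [0,t]} (A(s) + (β₁ ⊗ β₂)(t − s)); that is, the concatenation of the two systems offers the service curve β₁ ⊗ β₂ to the flow. -/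
/-- Min-plus convolution: `(f ⊗ g)(t) = inf_{s ∈ [0,t]} (f s + g (t - s))`. -/
noncomputable def mpConv (f g : ℝ → ℝ) : ℝ → ℝ :=
  fun t => sInf ((fun s => f s + g (t - s)) '' Set.Icc 0 t)

/-- **Concatenation of nodes.** If a first system offers service curve `β₁` to input
`A` with output `D₁`, and a second system offers service curve `β₂` to input `D₁`
with output `D₂`, then the concatenation offers the service curve `β₁ ⊗ β₂` to the
flow: `D₂(t) ≥ inf_{s ∈ [0,t]} (A(s) + (β₁ ⊗ β₂)(t − s))` for all `t ≥ 0`. -/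
theorem concatenation_of_nodes
    (A D₁ D₂ β₁ β₂ : ℝ → ℝ)
    (hA : ∀ x, 0 ≤ A x) (hD₁ : ∀ x, 0 ≤ D₁ x) (hD₂ : ∀ x, 0 ≤ D₂ x)
    (hβ₁ : ∀ x, 0 ≤ β₁ x) (hβ₂ : ∀ x, 0 ≤ β₂ x)
    (h1 : ∀ t : ℝ, 0 ≤ t → sInf ((fun s => A s + β₁ (t - s)) '' Set.Icc 0 t) ≤ D₁ t)
    (h2 : ∀ t : ℝ, 0 ≤ t → sInf ((fun s => D₁ s + β₂ (t - s)) '' Set.Icc 0 t) ≤ D₂ t) :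
    ∀ t : ℝ, 0 ≤ t →
      sInf ((fun s => A s + mpConv β₁ β₂ (t - s)) '' Set.Icc 0 t) ≤ D₂ t := by
  intro t ht
  apply le_of_forall_pos_le_add
  intro e he
  have hne : ∀ (f : ℝ → ℝ) (u : ℝ), 0 ≤ u → (f '' Set.Icc 0 u).Nonempty := fun f u hu =>
    ⟨f 0, 0, ⟨le_refl _, hu⟩, rfl⟩
  have hconv : ∀ u, 0 ≤ mpConv β₁ β₂ u := by
    intro u
    apply Real.sInf_nonneg
    rintro _ ⟨s, _, rfl⟩
    exact add_nonneg (hβ₁ _) (hβ₂ _)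
  obtain ⟨_, ⟨u, ⟨hu0, hut⟩, rfl⟩, hu⟩ := exists_lt_of_csInf_lt
    (hne (fun s => D₁ s + β₂ (t - s)) t ht)
    (lt_of_le_of_lt (h2 t ht) (lt_add_of_pos_right _ (half_pos he)))
  obtain ⟨_, ⟨v, ⟨hv0, hvu⟩, rfl⟩, hv⟩ := exists_lt_of_csInf_lt
    (hne (fun s => A s + β₁ (u - s)) u hu0)
    (lt_of_le_of_lt (h1 u hu0) (lt_add_of_pos_right _ (half_pos he)))
  have k1 : sInf ((fun s => A s + mpConv β₁ β₂ (t - s)) '' Set.Icc 0 t)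
      ≤ A v + mpConv β₁ β₂ (t - v) := by
    apply csInf_le
    · refine ⟨0, ?_⟩
      rintro _ ⟨s, _, rfl⟩
      exact add_nonneg (hA _) (hconv _)
    · exact ⟨v, ⟨hv0, hvu.trans hut⟩, rfl⟩
  have k2 : mpConv β₁ β₂ (t - v) ≤ β₁ (u - v) + β₂ (t - u) := by
    apply csInf_le
    · refine ⟨0, ?_⟩
      rintro _ ⟨s, _, rfl⟩
      exact add_nonneg (hβ₁ _) (hβ₂ _)
    · refine ⟨u - v, ⟨by linarith, by linarith⟩, ?_⟩
      simp
  simp only at hu hv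
  linarith
end

section
/- (Concatenation of n rate-latency servers.) Let m ≥ 1 and for k = 1, …, m let R_k ≥ 0 and T_k ≥ 0, and let β_{R,T}(t) = R·max(t − T, 0) denote the rate-latency curve with rate R and latency T. Then the iterated min-plus convolution satisfies, for every t ≥ 0, (β_{R₁,T₁} ⊗ β_{R₂,T₂} ⊗ ⋯ ⊗ β_{R_m,T_m})(t) = (min_{1 ≤ k ≤ m} R_k)·max(t − Σ_{k=1}^{m} T_k, 0). -/
/-- Iterated (left-nested) min-plus convolution `β 0 ⊗ β 1 ⊗ ⋯ ⊗ β k` of a family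
of `k + 1` functions. -/
noncomputable def iterMpConv : (k : ℕ) → (Fin (k + 1) → ℝ → ℝ) → ℝ → ℝ
  | 0, β => β 0
  | k + 1, β => mpConv (β 0) (iterMpConv k fun i => β i.succ)

theorem rl_mpConv (R T r S : ℝ) (hR : 0 ≤ R) (hT : 0 ≤ T) (hr : 0 ≤ r) (hS : 0 ≤ S)
    (g : ℝ → ℝ) (hg : ∀ u, 0 ≤ u → g u = r * max (u - S) 0) (t : ℝ) (ht : 0 ≤ t) :
    mpConv (fun u => R * max (u - T) 0) g t = min R r * max (t - (T + S)) 0 := by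
  unfold mpConv
  apply IsLeast.csInf_eq
  constructor
  · by_cases h : t ≤ T + S
    · refine ⟨min t T, ⟨le_min ht hT, min_le_left _ _⟩, ?_⟩
      have h1 : max (min t T - T) 0 = 0 := max_eq_right (by linarith [min_le_right t T])
      have h2 : max (t - min t T - S) 0 = 0 := by
        apply max_eq_right
        rcases min_cases t T with h | h <;> linarith
      have h3 : max (t - (T + S)) 0 = 0 := max_eq_right (by linarith)
      simp only [hg _ (sub_nonneg.2 (min_le_left t T)), h1, h2, h3]
      ring
    · push Not at h
      have h3 : max (t - (T + S)) 0 = t - (T + S) := max_eq_left (by linarith)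
      rcases le_total R r with hc | hc
      · refine ⟨t - S, ⟨by linarith, by linarith⟩, ?_⟩
        have h1 : max (t - S - T) 0 = t - S - T := max_eq_left (by linarith)
        have h2 : max (t - (t - S) - S) 0 = 0 := max_eq_right (by linarith)
        simp only [hg (t - (t - S)) (by linarith), h1, h2, h3, min_eq_left hc]
        ring
      · refine ⟨T, ⟨by linarith, by linarith⟩, ?_⟩
        have h1 : max (T - T) 0 = 0 := max_eq_right (by linarith)
        have h2 : max (t - T - S) 0 = t - T - S := max_eq_left (by linarith)
        simp only [hg (t - T) (by linarith), h1, h2, h3, min_eq_right hc]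
        ring
  · rintro _ ⟨s, ⟨hs0, hst⟩, rfl⟩
    simp only [hg (t - s) (by linarith)]
    have ha := le_max_right (s - T) 0
    have hb := le_max_right (t - s - S) 0
    have hab : max (t - (T + S)) 0 ≤ max (s - T) 0 + max (t - s - S) 0 :=
      max_le (by linarith [le_max_left (s - T) 0, le_max_left (t - s - S) 0]) (by linarith)
    calc min R r * max (t - (T + S)) 0
        ≤ min R r * (max (s - T) 0 + max (t - s - S) 0) :=
          mul_le_mul_of_nonneg_left hab (le_min hR hr)
      _ = min R r * max (s - T) 0 + min R r * max (t - s - S) 0 := by ring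
      _ ≤ _ := add_le_add (mul_le_mul_of_nonneg_right (min_le_left _ _) ha)
          (mul_le_mul_of_nonneg_right (min_le_right _ _) hb)

theorem rl_iInf_succ (k : ℕ) (R : Fin (k + 2) → ℝ) :
    (⨅ i, R i) = min (R 0) (⨅ i : Fin (k + 1), R i.succ) := by
  have hb : BddBelow (Set.range R) := (Set.finite_range R).bddBelow
  have hb' : BddBelow (Set.range fun i : Fin (k + 1) => R i.succ) :=
    (Set.finite_range _).bddBelow
  apply le_antisymm
  · exact le_min (ciInf_le hb 0) (le_ciInf fun i => ciInf_le hb i.succ)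
  · refine le_ciInf fun i => ?_
    refine Fin.cases (min_le_left _ _) (fun j => ?_) i
    exact (min_le_right _ _).trans (ciInf_le hb' j)

/-- **Concatenation of `m` rate-latency servers** (`m = k + 1 ≥ 1`): the iterated
min-plus convolution of the rate-latency curves `β_{R i, T i}`, `i = 0, …, k`, is the
rate-latency curve with rate `min_i R i` and latency `∑ i, T i`. -/
theorem rate_latency_concat_n (k : ℕ) (R T : Fin (k + 1) → ℝ)
    (hR : ∀ i, 0 ≤ R i) (hT : ∀ i, 0 ≤ T i) :
    ∀ t : ℝ, 0 ≤ t →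
      iterMpConv k (fun i => fun u => R i * max (u - T i) 0) t
        = (⨅ i, R i) * max (t - ∑ i, T i) 0 := by
  induction k with
  | zero =>
    intro t _
    simp [iterMpConv]
  | succ k ih =>
    intro t ht
    rw [rl_iInf_succ, Fin.sum_univ_succ]
    exact rl_mpConv (R 0) (T 0) _ _ (hR 0) (hT 0) (Real.iInf_nonneg fun i => hR _)
      (Finset.sum_nonneg fun i _ => hT _) _
      (ih (fun i => R i.succ) (fun i => T i.succ) (fun i => hR _) (fun i => hT _)) t ht
end

section
/- (Theorem 2: Blind multiplexing.) Let A₁, A₂, D₁, D₂ : [0,∞) → ℝ be continuous nondecreasing functions with A₁(0) = A₂(0) = D₁(0) = D₂(0) = 0, D₁(t) ≤ A₁(t) and D₂(t) ≤ A₂(t) for all t ≥ 0. Let β : [0,∞) → ℝ be such that the node offers the strict service curve β to the aggregate: for all 0 ≤ s ≤ t, if A₁(u) + A₂(u) > D₁(u) + D₂(u) for every u ∈ (s, t], then (D₁(t) + D₂(t)) − (D₁(s) + D₂(s)) ≥ β(t − s). Let α₂ : [0,∞) → ℝ be an arrival curve for flow 2, i.e., A₂(t) − A₂(s) ≤ α₂(t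 − s) for all 0 ≤ s ≤ t, and assume β(0) ≤ α₂(0). Define β₁(t) = max(β(t) − α₂(t), 0) and assume β₁ is nondecreasing. Then β₁ is a service curve for flow 1: for all t ≥ 0, D₁(t) ≥ inf_{s ∈ [0,t]} (A₁(s) + β₁(t − s)). -/
/-- **Blind multiplexing.** A node serves two flows with inputs `A₁, A₂` and outputs
`D₁, D₂` (continuous, nondecreasing, zero at `0`, with `Dᵢ ≤ Aᵢ`), offering a strict
service curve `β` to the aggregate. If `α₂` is an arrival curve for flow 2,
`β 0 ≤ α₂ 0`, and `β₁ t = max (β t − α₂ t) 0` is nondecreasing on `[0,∞)`, then `β₁`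
is a service curve for flow 1: `D₁ t ≥ inf_{s ∈ [0,t]} (A₁ s + β₁ (t − s))`. -/
theorem blind_multiplexing
    (A₁ A₂ D₁ D₂ β α₂ : ℝ → ℝ)
    (hA₁c : ContinuousOn A₁ (Set.Ici 0)) (hA₂c : ContinuousOn A₂ (Set.Ici 0))
    (hD₁c : ContinuousOn D₁ (Set.Ici 0)) (hD₂c : ContinuousOn D₂ (Set.Ici 0))
    (hA₁m : MonotoneOn A₁ (Set.Ici 0)) (hA₂m : MonotoneOn A₂ (Set.Ici 0))
    (hD₁m : MonotoneOn D₁ (Set.Ici 0)) (hD₂m : MonotoneOn D₂ (Set.Ici 0))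
    (hA₁0 : A₁ 0 = 0) (hA₂0 : A₂ 0 = 0) (hD₁0 : D₁ 0 = 0) (hD₂0 : D₂ 0 = 0)
    (hD₁A : ∀ t : ℝ, 0 ≤ t → D₁ t ≤ A₁ t) (hD₂A : ∀ t : ℝ, 0 ≤ t → D₂ t ≤ A₂ t)
    (hstrict : ∀ s t : ℝ, 0 ≤ s → s ≤ t →
      (∀ u ∈ Set.Ioc s t, D₁ u + D₂ u < A₁ u + A₂ u) →
      β (t - s) ≤ (D₁ t + D₂ t) - (D₁ s + D₂ s))
    (hα₂ : ∀ s t : ℝ, 0 ≤ s → s ≤ t → A₂ t - A₂ s ≤ α₂ (t - s))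
    (hβ0 : β 0 ≤ α₂ 0)
    (hβ₁mono : MonotoneOn (fun t => max (β t - α₂ t) 0) (Set.Ici 0)) :
    ∀ t : ℝ, 0 ≤ t →
      sInf ((fun s => A₁ s + max (β (t - s) - α₂ (t - s)) 0) '' Set.Icc 0 t)
        ≤ D₁ t := by
  intro t ht
  have hsub : Set.Icc (0:ℝ) t ⊆ Set.Ici 0 := fun x hx => hx.1
  have hc : ContinuousOn (fun u => A₁ u + A₂ u - (D₁ u + D₂ u)) (Set.Icc 0 t) :=
    ((hA₁c.add hA₂c).sub (hD₁c.add hD₂c)).mono hsub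
  have hK : IsCompact (Set.Icc 0 t ∩ (fun u => A₁ u + A₂ u - (D₁ u + D₂ u)) ⁻¹' {0}) :=
    isCompact_Icc.of_isClosed_subset
      (hc.preimage_isClosed_of_isClosed isClosed_Icc isClosed_singleton)
      Set.inter_subset_left
  obtain ⟨s, ⟨⟨hs0, hst⟩, hs⟩, hmax⟩ := hK.exists_isGreatest
    ⟨0, ⟨le_refl _, ht⟩, by simp [hA₁0, hA₂0, hD₁0, hD₂0]⟩
  have hs' : A₁ s + A₂ s - (D₁ s + D₂ s) = 0 := hs
  have h1 := hD₁A s hs0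
  have h2 := hD₂A s hs0
  have hb := hstrict s t hs0 hst (by
    intro u hu
    have hu0 : 0 ≤ u := hs0.trans hu.1.le
    have g1 := hD₁A u hu0
    have g2 := hD₂A u hu0
    by_contra hcon
    have hz : A₁ u + A₂ u - (D₁ u + D₂ u) = 0 := by linarith
    have := hmax ⟨⟨hu0, hu.2⟩, hz⟩
    linarith [hu.1])
  have ha := hα₂ s t hs0 hst
  have hm := hD₁m (show s ∈ Set.Ici 0 from hs0) (show t ∈ Set.Ici 0 from ht) hst
  have h3 := hD₂A t ht
  have hbdd : BddBelow ((fun s => A₁ s + max (β (t - s) - α₂ (t - s)) 0) '' Set.Icc 0 t) := by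
    refine ⟨0, ?_⟩
    rintro _ ⟨x, hx, rfl⟩
    have e1 := hA₁m (Set.self_mem_Ici (a := (0:ℝ))) (show x ∈ Set.Ici 0 from hx.1) hx.1
    have e2 := le_max_right (β (t - x) - α₂ (t - x)) 0
    show 0 ≤ A₁ x + max (β (t - x) - α₂ (t - x)) 0
    linarith
  refine (csInf_le hbdd ⟨s, ⟨hs0, hst⟩, rfl⟩).trans ?_
  show A₁ s + max (β (t - s) - α₂ (t - s)) 0 ≤ D₁ t
  have : max (β (t - s) - α₂ (t - s)) 0 ≤ D₁ t - A₁ s :=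
    max_le (by linarith) (by linarith)
  linarith
end

section
/- (Every strict service curve is a service curve.) Let A, D : [0,∞) → ℝ be continuous nondecreasing functions with A(0) = D(0) = 0 and D(t) ≤ A(t) for all t ≥ 0. Let β : [0,∞) → ℝ satisfy β(0) ≤ 0 and suppose the system offers the strict service curve β: for all 0 ≤ s ≤ t, if A(u) > D(u) for every u ∈ (s, t], then D(t) − D(s) ≥ β(t − s). Then β is a service curve: for all t ≥ 0, D(t) ≥ inf_{s ∈ [0,t]} (A(s) + β(t − s)). -/
/-- **Every strict service curve is a service curve.** Let `A, D` be continuous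
nondecreasing on `[0,∞)` with `A 0 = D 0 = 0` and `D ≤ A` on `[0,∞)`, and let `β`
with `β 0 ≤ 0` be a strict service curve: over any backlogged interval `(s, t]` the
output increases by at least `β (t − s)`. Then `β` is a service curve:
`D t ≥ inf_{s ∈ [0,t]} (A s + β (t − s))` for all `t ≥ 0`. -/
theorem strict_service_curve_is_service_curve
    (A D β : ℝ → ℝ)
    (hAc : ContinuousOn A (Set.Ici 0)) (hDc : ContinuousOn D (Set.Ici 0))
    (hAm : MonotoneOn A (Set.Ici 0)) (hDm : MonotoneOn D (Set.Ici 0))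
    (hA0 : A 0 = 0) (hD0 : D 0 = 0)
    (hDA : ∀ t : ℝ, 0 ≤ t → D t ≤ A t)
    (hβ0 : β 0 ≤ 0)
    (hstrict : ∀ s t : ℝ, 0 ≤ s → s ≤ t →
      (∀ u ∈ Set.Ioc s t, D u < A u) → β (t - s) ≤ D t - D s) :
    ∀ t : ℝ, 0 ≤ t → sInf ((fun s => A s + β (t - s)) '' Set.Icc 0 t) ≤ D t := by
  intro t ht
  by_cases hb : BddBelow ((fun s => A s + β (t - s)) '' Set.Icc 0 t)
  · have hsub : Set.Icc (0:ℝ) t ⊆ Set.Ici 0 := fun x hx => hx.1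
    have hcl : IsClosed (Set.Icc (0:ℝ) t ∩ (fun u => A u - D u) ⁻¹' {0}) :=
      ((hAc.mono hsub).sub (hDc.mono hsub)).preimage_isClosed_of_isClosed
        isClosed_Icc isClosed_singleton
    have hcp : IsCompact (Set.Icc (0:ℝ) t ∩ (fun u => A u - D u) ⁻¹' {0}) :=
      isCompact_Icc.of_isClosed_subset hcl Set.inter_subset_left
    obtain ⟨s, ⟨hs, hs0⟩, hmax⟩ := hcp.exists_isGreatest
      ⟨0, ⟨le_refl 0, ht⟩, by simp [hA0, hD0]⟩
    have hs1 : A s - D s = 0 := hs0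
    have h := hstrict s t hs.1 hs.2 (by
      intro u hu
      have hu0 : 0 ≤ u := hs.1.trans hu.1.le
      refine lt_of_le_of_ne (hDA u hu0) fun he => ?_
      have : u ≤ s := hmax ⟨⟨hu0, hu.2⟩, by simp [he]⟩
      exact absurd hu.1 (not_lt.mpr this))
    have h2 : sInf ((fun s => A s + β (t - s)) '' Set.Icc 0 t) ≤ A s + β (t - s) :=
      csInf_le hb ⟨s, hs, rfl⟩
    linarith
  · rw [Real.sInf_of_not_bddBelow hb, ← hD0]
    exact hDm (Set.mem_Ici.mpr le_rfl) (Set.mem_Ici.mpr ht) ht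
end

section
/- (Lemma 3: a work-conserving constant-rate link preserves the (σ, x) constraint.) Let σ ≥ 0, x ≥ 0, c ≥ 0. Let A : ℝ → ℝ be nondecreasing with A(0) = 0 and A(t) − A(s) ≤ σ + x(t − s) for all 0 ≤ s ≤ t (A is (σ, x)-upper constrained). Define the output of a work-conserving link of rate c by D(t) = inf_{s ∈ [0,t]} (A(s) + c(t − s)) for t ≥ 0. Then D is also (σ, x)-upper constrained: D(t) − D(s) ≤ σ + x(t − s) for all 0 ≤ s ≤ t. -/
/-- **A work-conserving constant-rate link preserves the `(σ, x)` constraint.**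
If the nondecreasing input `A` (with `A 0 = 0`) is `(σ, x)`-upper constrained, then
the output `D t = inf_{s ∈ [0,t]} (A s + c(t − s))` of a work-conserving link of
rate `c` is also `(σ, x)`-upper constrained. -/
theorem work_conserving_preserves_constraint
    (σ x c : ℝ) (hσ : 0 ≤ σ) (hx : 0 ≤ x) (hc : 0 ≤ c)
    (A : ℝ → ℝ) (hAmono : Monotone A) (hA0 : A 0 = 0)
    (hA : ∀ s t : ℝ, 0 ≤ s → s ≤ t → A t - A s ≤ σ + x * (t - s))
    (D : ℝ → ℝ)
    (hD : ∀ t : ℝ, 0 ≤ t → D t = sInf ((fun s => A s + c * (t - s)) '' Set.Icc 0 t)) :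
    ∀ s t : ℝ, 0 ≤ s → s ≤ t → D t - D s ≤ σ + x * (t - s) := by
  intro s t hs hst
  suffices h : D t - (σ + x * (t - s)) ≤ D s by linarith
  rw [hD s hs]
  refine le_csInf ⟨_, ⟨0, ⟨le_refl _, hs⟩, rfl⟩⟩ ?_
  rintro _ ⟨u, ⟨hu0, hus⟩, rfl⟩
  have hbdd : BddBelow ((fun s => A s + c * (t - s)) '' Set.Icc 0 t) := by
    refine ⟨0, ?_⟩
    rintro _ ⟨v, ⟨hv0, hvt⟩, rfl⟩
    have h1 := hAmono hv0
    have h2 := mul_nonneg hc (sub_nonneg.2 hvt)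
    simp only
    linarith
  have h1 : D t ≤ A (u + (t - s)) + c * (t - (u + (t - s))) := by
    rw [hD t (hs.trans hst)]
    exact csInf_le hbdd ⟨u + (t - s), ⟨by linarith, by linarith⟩, rfl⟩
  have h2 := hA u (u + (t - s)) hu0 (by linarith)
  have e1 : t - (u + (t - s)) = s - u := by ring
  have e2 : u + (t - s) - u = t - s := by ring
  rw [e1] at h1
  rw [e2] at h2
  simp only
  linarith
end
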